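/- For every number field K, the class number h_K of K satisfies h_K ≤ |Δ_K|^{3/2}, where Δ_K is the discriminant of K. -/

import Mathlib

/-!
By Minkowski, every ideal class contains an integral ideal of norm at most `A * √|Δ|`, where `A` is
the Minkowski constant, so the class number is at most the number of such ideals.

At most `n = [K : ℚ]` primes of `𝓞 K` lie over each rational prime, so the primes of `𝓞 K` can be
coloured with `n` colours in such a way that distinct primes over the same rational prime receive
distinct colours. Distinct primes of one colour then have coprime norms, so the `n` norms of the
monochromatic parts of an ideal determine the ideal. Hence `ζ_K(s) ≤ ζ(s) ^ n` for `s > 1`, and at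
most `x ^ s * ζ(s) ^ n` ideals have norm at most `x`.

The exponent `s = 3` gives `h ≤ |Δ| ^ (3 / 2) * (A ^ 3 * ζ(3) ^ n)`. The last factor is at most `1`
when `n ≥ 2`, since `A ^ 2 ≤ 4 / π ^ n` and `ζ(3) ≤ ζ(2) = π ^ 2 / 6`.
-/

open Module NumberField Ideal UniqueFactorizationMonoid
open scoped nonZeroDivisors Real Nat

section Multiset

variable {α ι : Type*}

theorem multiset_sum_filter_eq_self [Fintype ι] [DecidableEq ι] (c : α → ι) (s : Multiset α) :
    ∑ i, s.filter (c · = i) = s := by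
  classical
  ext a
  simp [Multiset.count_sum', Multiset.count_filter]

theorem multiset_eq_of_prod_map_eq_of_coprime {g : α → ℕ} {s t : Multiset α}
    (hs : ∀ a ∈ s, 1 < g a) (ht : ∀ b ∈ t, 1 < g b)
    (hst : ∀ a ∈ s, ∀ b ∈ t, a ≠ b → (g a).Coprime (g b))
    (h : (s.map g).prod = (t.map g).prod) : s = t := by
  induction s using Multiset.induction_on generalizing t with
  | empty =>
    refine (Multiset.eq_zero_of_forall_notMem fun b hb ↦ (ht b hb).ne' ?_).symm
    exact Nat.dvd_one.1 <| (Multiset.dvd_prod (Multiset.mem_map_of_mem g hb)).trans (by simp [← h])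
  | cons a s ih =>
    have hdvd : g a ∣ (t.map g).prod := by
      rw [← h, Multiset.map_cons, Multiset.prod_cons]
      exact dvd_mul_right _ _
    have ha : a ∈ t := by
      by_contra hat
      have hcop : (g a).Coprime (t.map g).prod := by
        simp only [Nat.coprime_multiset_prod_right_iff, Multiset.forall_mem_map_iff]
        exact fun b hb ↦ hst a (by simp) b hb (ne_of_mem_of_not_mem hb hat).symm
      exact (hs a (by simp)).ne' (hcop.eq_one_of_dvd hdvd)
    obtain ⟨t, rfl⟩ := Multiset.exists_cons_of_mem ha
    rw [ih (t := t)]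
    · exact fun b hb ↦ hs b (Multiset.mem_cons_of_mem hb)
    · exact fun b hb ↦ ht b (Multiset.mem_cons_of_mem hb)
    · exact fun b hb b' hb' ↦ hst b (Multiset.mem_cons_of_mem hb) b' (Multiset.mem_cons_of_mem hb')
    · simp only [Multiset.map_cons, Multiset.prod_cons] at h
      exact Nat.eq_of_mul_eq_mul_left (zero_lt_one.trans (hs a (by simp))) h

end Multiset

theorem sum_prod_le_tsum_pow {α ι : Type*} [Fintype ι] {g : α → ℝ} (hg : ∀ a, 0 ≤ g a)
    (hsum : Summable g) (T : Finset (ι → α)) :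
    ∑ m ∈ T, ∏ i, g (m i) ≤ (∑' a, g a) ^ Fintype.card ι := by
  classical
  let S : Finset α := T.biUnion fun m ↦ Finset.univ.image m
  have hT : T ⊆ Fintype.piFinset fun _ ↦ S := fun m hm ↦ Fintype.mem_piFinset.2 fun i ↦
    Finset.mem_biUnion.2 ⟨m, hm, Finset.mem_image_of_mem m (Finset.mem_univ i)⟩
  calc ∑ m ∈ T, ∏ i, g (m i)
    _ ≤ ∑ m ∈ Fintype.piFinset fun _ ↦ S, ∏ i, g (m i) :=
      Finset.sum_le_sum_of_subset_of_nonneg hT fun m _ _ ↦ Finset.prod_nonneg fun i _ ↦ hg (m i)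
    _ = (∑ a ∈ S, g a) ^ Fintype.card ι := by
      rw [Finset.sum_prod_piFinset, Finset.prod_const, Finset.card_univ]
    _ ≤ (∑' a, g a) ^ Fintype.card ι :=
      pow_le_pow_left₀ (Finset.sum_nonneg fun a _ ↦ hg a) (hsum.sum_le_tsum S fun a _ ↦ hg a) _

section PrimesOver

variable (R S : Type*) [CommRing R] [IsDomain R] [CommRing S] [Algebra R S] [Module.Finite R S]
  [Module.Flat R S]

theorem encard_primesOver_le_finrank (p : Ideal R) :
    (p.primesOver S).encard ≤ finrank R S := by
  obtain hempty | ⟨P, hP⟩ := (p.primesOver S).eq_empty_or_nonempty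
  · simp [hempty]
  have : p.IsPrime := hP.2.over ▸ hP.1.under R
  have : Fintype (p.primesOver S) := (Algebra.QuasiFinite.finite_primesOver p).fintype
  rw [← Set.coe_fintypeCard, Nat.cast_le, ← sum_ramification_inertia_eq_finrank p S,
    Fintype.card_eq_sum_ones]
  exact Finset.sum_le_sum fun Q _ ↦
    Nat.mul_pos (Q.1.ramificationIdx_pos R) (Q.1.inertiaDeg_pos R)

theorem exists_forall_injOn_primesOver [NeZero (finrank R S)] :
    ∃ c : Ideal S → Fin (finrank R S), ∀ p : Ideal R, (p.primesOver S).InjOn c := by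
  have hexists (p : Ideal R) : ∃ c : Ideal S → Fin (finrank R S), (p.primesOver S).InjOn c := by
    obtain ⟨c, -, hc⟩ := (Algebra.QuasiFinite.finite_primesOver p).exists_injOn_of_encard_le
      (t := (Set.univ : Set (Fin (finrank R S))))
      (by simpa using encard_primesOver_le_finrank R S p)
    exact ⟨c, hc⟩
  choose c hc using hexists
  refine ⟨fun P ↦ c (P.under R) P, fun p P hP Q hQ h ↦ hc p hP hQ ?_⟩
  simpa only [← hP.2.over, ← hQ.2.over] using h

end PrimesOver

section AbsNorm

variable {R : Type*} [CommRing R] [IsDedekindDomain R] [Module.Free ℤ R] [Module.Finite ℤ R]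

theorem coprime_absNorm_of_under_ne {P Q : Ideal R} (hP : Prime P) (hQ : Prime Q)
    (h : P.under ℤ ≠ Q.under ℤ) : (absNorm P).Coprime (absNorm Q) := by
  have hp {P : Ideal R} (hP : Prime P) : (absNorm (P.under ℤ)).Prime :=
    have : P.IsPrime := isPrime_of_prime hP
    have : NeZero P := ⟨hP.ne_zero⟩
    Nat.absNorm_under_prime P
  rw [absNorm_eq_pow_inertiaDeg' P (hp hP), absNorm_eq_pow_inertiaDeg' Q (hp hQ)]
  refine Nat.coprime_pow_primes _ _ (hp hP) (hp hQ) fun heq ↦ h ?_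
  rw [← Int.ideal_span_absNorm_eq_self (P.under ℤ), heq, Int.ideal_span_absNorm_eq_self]

theorem one_lt_absNorm_of_prime {P : Ideal R} (hP : Prime P) : 1 < absNorm P :=
  Nat.one_lt_iff_ne_zero_and_ne_one.2
    ⟨absNorm_eq_zero_iff.not.2 hP.ne_zero, absNorm_eq_one_iff.not.2 (isPrime_of_prime hP).ne_top⟩

theorem multiset_eq_of_absNorm_prod_eq {s t : Multiset (Ideal R)}
    (hs : ∀ P ∈ s, Prime P) (ht : ∀ Q ∈ t, Prime Q)
    (hst : ∀ P ∈ s, ∀ Q ∈ t, P.under ℤ = Q.under ℤ → P = Q)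
    (h : absNorm s.prod = absNorm t.prod) : s = t := by
  refine multiset_eq_of_prod_map_eq_of_coprime (fun P hP ↦ one_lt_absNorm_of_prime (hs P hP))
    (fun Q hQ ↦ one_lt_absNorm_of_prime (ht Q hQ)) (fun P hP Q hQ hPQ ↦ ?_)
    (by simpa only [map_multiset_prod] using h)
  exact coprime_absNorm_of_under_ne (hs P hP) (ht Q hQ) (mt (hst P hP Q hQ) hPQ)

variable (R) in
theorem exists_injective_forall_prod_eq_absNorm :
    ∃ f : (Ideal R)⁰ → Fin (finrank ℤ R) → ℕ,
      Function.Injective f ∧ ∀ I, ∏ i, f I i = absNorm (I : Ideal R) := by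
  have : NeZero (finrank ℤ R) := ⟨finrank_pos.ne'⟩
  obtain ⟨c, hc⟩ := exists_forall_injOn_primesOver ℤ R
  let part (I : (Ideal R)⁰) (i : Fin (finrank ℤ R)) : Multiset (Ideal R) :=
    (normalizedFactors (I : Ideal R)).filter (c · = i)
  have hprime {I i} : ∀ P ∈ part I i, Prime P := fun P hP ↦
    prime_of_normalized_factor P (Multiset.mem_of_mem_filter hP)
  have hprod (I) : (∑ i, part I i).prod = (I : Ideal R) := by
    rw [multiset_sum_filter_eq_self,
      Ideal.prod_normalizedFactors_eq_self (nonZeroDivisors.coe_ne_zero I)]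
  refine ⟨fun I i ↦ absNorm (part I i).prod, fun I J hIJ ↦ ?_, fun I ↦ ?_⟩
  · have hpart (i) : part I i = part J i := by
      refine multiset_eq_of_absNorm_prod_eq hprime hprime (fun P hP Q hQ hunder ↦ ?_)
        (congrFun hIJ i)
      exact hc (P.under ℤ) ⟨isPrime_of_prime (hprime P hP), ⟨rfl⟩⟩
        ⟨isPrime_of_prime (hprime Q hQ), ⟨hunder⟩⟩
        ((Multiset.of_mem_filter hP).trans (Multiset.of_mem_filter hQ).symm)
    ext1
    rw [← hprod I, ← hprod J, Finset.sum_congr rfl fun i _ ↦ hpart i]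
  · rw [← map_prod, ← Multiset.prod_sum, hprod]

theorem sum_one_div_absNorm_rpow_le {s : ℝ} (hs : 1 < s) (T : Finset (Ideal R)⁰) :
    ∑ I ∈ T, 1 / (absNorm (I : Ideal R) : ℝ) ^ s ≤
      (∑' k : ℕ, 1 / (k : ℝ) ^ s) ^ finrank ℤ R := by
  classical
  obtain ⟨f, hf, hprod⟩ := exists_injective_forall_prod_eq_absNorm R
  calc ∑ I ∈ T, 1 / (absNorm (I : Ideal R) : ℝ) ^ s
    _ = ∑ I ∈ T, ∏ i, 1 / (f I i : ℝ) ^ s := by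
      refine Finset.sum_congr rfl fun I _ ↦ ?_
      rw [← hprod, Nat.cast_prod, ← Real.finsetProd_rpow _ _ fun i _ ↦ Nat.cast_nonneg _,
        Finset.prod_div_distrib, Finset.prod_const_one]
    _ = ∑ m ∈ T.image f, ∏ i, 1 / (m i : ℝ) ^ s := by
      rw [Finset.sum_image hf.injOn]
    _ ≤ (∑' k : ℕ, 1 / (k : ℝ) ^ s) ^ finrank ℤ R := by
      simpa using sum_prod_le_tsum_pow (fun k : ℕ ↦ by positivity)
        (Real.summable_one_div_nat_rpow.2 hs) (T.image f)

variable (R) in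
theorem finite_setOf_absNorm_cast_le (x : ℝ) :
    {I : (Ideal R)⁰ | (absNorm (I : Ideal R) : ℝ) ≤ x}.Finite := by
  have : IsAddTorsionFree R := .of_isTorsionFree ℤ R
  have : CharZero R := .of_isAddTorsionFree R R
  exact (finite_setOfPred_absNorm_le₀ ⌊x⌋₊).subset fun I hI ↦ Nat.le_floor hI

variable (R) in
theorem ncard_setOf_absNorm_le_le_rpow_mul_tsum_pow {s : ℝ} (hs : 1 < s) {x : ℝ} (hx : 0 ≤ x) :
    {I : (Ideal R)⁰ | (absNorm (I : Ideal R) : ℝ) ≤ x}.ncard ≤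
      x ^ s * (∑' k : ℕ, 1 / (k : ℝ) ^ s) ^ finrank ℤ R := by
  have hfin := finite_setOf_absNorm_cast_le R x
  calc ({I : (Ideal R)⁰ | (absNorm (I : Ideal R) : ℝ) ≤ x}.ncard : ℝ)
    _ = ∑ I ∈ hfin.toFinset, 1 := by
      rw [Set.ncard_eq_toFinset_card _ hfin]; simp
    _ ≤ ∑ I ∈ hfin.toFinset, x ^ s * (1 / (absNorm (I : Ideal R) : ℝ) ^ s) := by
      refine Finset.sum_le_sum fun I hI ↦ ?_
      have hI0 : (0 : ℝ) < absNorm (I : Ideal R) := mod_cast absNorm_pos_of_nonZeroDivisors I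
      rw [mul_one_div, one_le_div (by positivity)]
      gcongr
      simpa using hI
    _ ≤ x ^ s * (∑' k : ℕ, 1 / (k : ℝ) ^ s) ^ finrank ℤ R := by
      rw [← Finset.mul_sum]
      gcongr
      exact sum_one_div_absNorm_rpow_le hs _

end AbsNorm

theorem tsum_one_div_nat_rpow_le_pi_sq_div_six {s : ℝ} (hs : 2 ≤ s) :
    ∑' k : ℕ, 1 / (k : ℝ) ^ s ≤ π ^ 2 / 6 := by
  rw [← hasSum_zeta_two.tsum_eq]
  refine Summable.tsum_le_tsum (fun k ↦ ?_) (Real.summable_one_div_nat_rpow.2 (by linarith))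
    hasSum_zeta_two.summable
  obtain rfl | hk := eq_or_ne k 0
  · simp [Real.zero_rpow (by linarith : s ≠ 0)]
  · have hk' : (1 : ℝ) ≤ k := mod_cast Nat.one_le_iff_ne_zero.2 hk
    rw [← Real.rpow_two]
    gcongr

theorem two_mul_pow_self_le_succ_pow {n : ℕ} (hn : n ≠ 0) : 2 * n ^ n ≤ (n + 1) ^ n := by
  have h : n ^ n + n * n ^ (n - 1) ≤ (n + 1) ^ n := by
    simpa using pow_add_mul_le_add_pow n.zero_le (Nat.zero_le (2 * n + 1)) n
  rwa [mul_pow_sub_one hn, ← two_mul] at h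

theorem factorial_mul_two_pow_le (n : ℕ) : n ! * 2 ^ n ≤ 2 * n ^ n := by
  induction n with
  | zero => simp
  | succ n ih =>
    obtain rfl | hn := eq_or_ne n 0
    · simp
    · calc (n + 1)! * 2 ^ (n + 1)
        _ = 2 * (n + 1) * (n ! * 2 ^ n) := by rw [Nat.factorial_succ]; ring
        _ ≤ 2 * (n + 1) * (2 * n ^ n) := by gcongr
        _ ≤ 2 * (n + 1) * (n + 1) ^ n := by gcongr; exact two_mul_pow_self_le_succ_pow hn
        _ = 2 * (n + 1) ^ (n + 1) := by ring

section NumberField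

variable (K : Type*) [Field K] [NumberField K]

/-- The Minkowski constant `(4 / π) ^ r₂ * n! / n ^ n` of a number field of degree `n` with `r₂`
complex places: Minkowski's bound for `K` is this constant times `√|Δ_K|`. -/
noncomputable def minkowskiConstant : ℝ :=
  (4 / π) ^ InfinitePlace.nrComplexPlaces K * ((finrank ℚ K)! / (finrank ℚ K : ℝ) ^ finrank ℚ K)

theorem minkowskiConstant_nonneg : 0 ≤ minkowskiConstant K := by
  unfold minkowskiConstant
  positivity

theorem minkowskiConstant_sq_le : minkowskiConstant K ^ 2 ≤ 4 / π ^ finrank ℚ K := by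
  have hcomplex : InfinitePlace.nrComplexPlaces K * 2 ≤ finrank ℚ K := by
    have := InfinitePlace.card_add_two_mul_card_eq_rank K
    omega
  have hfactorial : ((finrank ℚ K)! / (finrank ℚ K : ℝ) ^ finrank ℚ K) ≤ 2 / 2 ^ finrank ℚ K := by
    have : 0 < finrank ℚ K := finrank_pos
    rw [div_le_div_iff₀ (by positivity) (by positivity)]
    exact_mod_cast factorial_mul_two_pow_le (finrank ℚ K)
  have hfour_div_pi : 1 ≤ 4 / π := (one_le_div Real.pi_pos).2 Real.pi_le_four
  calc minkowskiConstant K ^ 2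
    _ ≤ (4 / π) ^ finrank ℚ K * (2 / 2 ^ finrank ℚ K) ^ 2 := by
      rw [minkowskiConstant, mul_pow, ← pow_mul]
      gcongr
    _ = 4 / π ^ finrank ℚ K := by
      rw [div_pow, div_pow, pow_right_comm]
      norm_num

theorem minkowskiConstant_pow_three_mul_le_one (hK : 2 ≤ finrank ℚ K) :
    minkowskiConstant K ^ 3 * (π ^ 2 / 6) ^ finrank ℚ K ≤ 1 := by
  have hA := minkowskiConstant_nonneg K
  have hpi := Real.pi_lt_four
  have hsq : (minkowskiConstant K ^ 3 * (π ^ 2 / 6) ^ finrank ℚ K) ^ 2 ≤ 1 :=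
    calc (minkowskiConstant K ^ 3 * (π ^ 2 / 6) ^ finrank ℚ K) ^ 2
      _ = (minkowskiConstant K ^ 2) ^ 3 * (π ^ 4 / 36) ^ finrank ℚ K := by
        rw [mul_pow, pow_right_comm, pow_right_comm (π ^ 2 / 6)]
        norm_num [div_pow, ← pow_mul]
      _ ≤ (4 / π ^ finrank ℚ K) ^ 3 * (π ^ 4 / 36) ^ finrank ℚ K := by
        gcongr
        exact minkowskiConstant_sq_le K
      _ = 64 * (π / 36) ^ finrank ℚ K := by
        simp only [div_pow, ← pow_mul]
        field_simp
        ring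
      _ ≤ 64 * (π / 36) ^ 2 := by
        gcongr ?_ * ?_
        exact pow_le_pow_of_le_one (by positivity) (by linarith) hK
      _ ≤ 1 := by nlinarith [Real.pi_pos]
  exact (sq_le_one_iff₀ (by positivity)).1 hsq

theorem classNumber_le_ncard_setOf_absNorm_le :
    classNumber K ≤
      {I : (Ideal (𝓞 K))⁰ |
        absNorm (I : Ideal (𝓞 K)) ≤ minkowskiConstant K * √|discr K|}.ncard := by
  have : Finite {I : (Ideal (𝓞 K))⁰ |
      absNorm (I : Ideal (𝓞 K)) ≤ minkowskiConstant K * √|discr K|} :=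
    finite_setOf_absNorm_cast_le _ _
  rw [classNumber, ← Nat.card_eq_fintype_card, ← Nat.card_coe_set_eq]
  refine Nat.card_le_card_of_surjective (fun I ↦ ClassGroup.mk0 I.1) fun C ↦ ?_
  obtain ⟨I, hIC, hI⟩ := exists_ideal_in_class_of_norm_le C
  exact ⟨⟨I, by simpa only [minkowskiConstant, mul_assoc, Set.mem_ofPred_eq] using hI⟩, hIC⟩

variable {K} in
theorem classNumber_eq_one_of_finrank_eq_one (hK : finrank ℚ K = 1) : classNumber K = 1 := by
  let e : ℚ ≃+* K := RingEquiv.ofBijective (algebraMap ℚ K)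
    (Algebra.finrank_eq_one_iff_bijective_algebraMap.1 hK)
  have : IsPrincipalIdealRing (𝓞 ℚ) := classNumber_eq_one_iff.1 Rat.classNumber_eq
  exact classNumber_eq_one_iff.2 (.of_surjective (RingOfIntegers.mapRingEquiv e)
    (RingOfIntegers.mapRingEquiv e).surjective)

end NumberField

/-- Lenstra's bound: the class number of a number field `K` is at most `|Δ_K|^{3/2}`. -/
theorem classNumber_le_discr_pow (K : Type*) [Field K] [NumberField K] :
    (NumberField.classNumber K : ℝ) ≤ |(NumberField.discr K : ℝ)| ^ ((3 : ℝ) / 2) := by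
  have hA := minkowskiConstant_nonneg K
  obtain hK | hK : finrank ℚ K = 1 ∨ 2 ≤ finrank ℚ K := by
    have : 0 < finrank ℚ K := finrank_pos
    omega
  · rw [classNumber_eq_one_of_finrank_eq_one hK, Nat.cast_one]
    exact Real.one_le_rpow (mod_cast Int.one_le_abs (discr_ne_zero K)) (by norm_num)
  · calc (classNumber K : ℝ)
      _ ≤ (minkowskiConstant K * √|discr K|) ^ (3 : ℝ) *
          (∑' k : ℕ, 1 / (k : ℝ) ^ (3 : ℝ)) ^ finrank ℚ K := by
        rw [← RingOfIntegers.rank K]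
        exact (Nat.cast_le.2 (classNumber_le_ncard_setOf_absNorm_le K)).trans
          (ncard_setOf_absNorm_le_le_rpow_mul_tsum_pow _ (by norm_num) (by positivity))
      _ ≤ (minkowskiConstant K * √|discr K|) ^ (3 : ℝ) * (π ^ 2 / 6) ^ finrank ℚ K := by
        gcongr
        exact tsum_one_div_nat_rpow_le_pi_sq_div_six (by norm_num)
      _ = |(discr K : ℝ)| ^ ((3 : ℝ) / 2) *
          (minkowskiConstant K ^ 3 * (π ^ 2 / 6) ^ finrank ℚ K) := by
        rw [Real.mul_rpow hA (Real.sqrt_nonneg _), Real.sqrt_eq_rpow,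
          ← Real.rpow_mul (by positivity), Real.rpow_ofNat]
        ring_nf
      _ ≤ |(discr K : ℝ)| ^ ((3 : ℝ) / 2) :=
        mul_le_of_le_one_right (by positivity) (minkowskiConstant_pow_three_mul_le_one K hK)
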